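/- arXiv:0912.2213 — 3 statements merged into one kernel-verified Lean document; each statement's English description precedes it below -/
import Mathlib

section
/- Let I_n^t, V_n^t be a solution of the hpdToda equation. Then for all t ∈ ℤ and all nonzero y ∈ ℂ, L_t(y)·X_{t+M}(y) = X_t(y)·L_t(y); that is, conjugation of X_t(y) by L_t(y)^{−1} realizes the time evolution t ↦ t+M whenever L_t(y) is invertible. -/
/-!
Let `S` be the twisted cyclic shift `Stoda`. Then `R_t = diag(I_n^t) + S` and
`L_t = 1 + S⁻¹ diag(V_n^t)`, and `S diag(a_n) = diag(a_{n+1}) S` for `N`-periodic `a`. Comparing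
coefficients of `S`, `1` and `S⁻¹`, the two hpdToda equations become the local Lax relation
`L_{t+1} R_{t+M} = R_t L_t`. Iterating it moves `L` through a product of `R`'s:
`R_{t+k-1} ⋯ R_t L_t = L_{t+k} R_{t+M+k-1} ⋯ R_{t+M}`; the claim is the case `k = M`,
multiplied by `L_t` on the left.
-/

open Matrix Finset Filter

/-- The matrix `L_t(y)`: `(n,n)`-entry `1`, `(n+1,n)`-entry `V_n^t` for `n = 1,…,N-1`,
`(1,N)`-entry `V_N^t / y` (indices written 1-based; here realized 0-based on `Fin N`). -/
noncomputable def Ltoda (N : ℕ) (V : ℤ → ℤ → ℂ) (t : ℤ) (y : ℂ) :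
    Matrix (Fin N) (Fin N) ℂ := fun i j =>
  (if i = j then 1 else 0) +
  (if (i : ℕ) = (j : ℕ) + 1 then V ((j : ℕ) + 1) t else 0) +
  (if (i : ℕ) = 0 ∧ (j : ℕ) = N - 1 then V N t / y else 0)

/-- The matrix `R_t(y)`: `(n,n)`-entry `I_n^t`, `(n,n+1)`-entry `1` for `n = 1,…,N-1`,
`(N,1)`-entry `y`. -/
noncomputable def Rtoda (N : ℕ) (I : ℤ → ℤ → ℂ) (t : ℤ) (y : ℂ) :
    Matrix (Fin N) (Fin N) ℂ := fun i j =>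
  (if i = j then I ((i : ℕ) + 1) t else 0) +
  (if (j : ℕ) = (i : ℕ) + 1 then 1 else 0) +
  (if (i : ℕ) = N - 1 ∧ (j : ℕ) = 0 then y else 0)

/-- The shift matrix `S(y)`: `(n,n+1)`-entry `1` for `n = 1,…,N-1`, `(N,1)`-entry `y`. -/
def Stoda (N : ℕ) (y : ℂ) : Matrix (Fin N) (Fin N) ℂ := fun i j =>
  (if (j : ℕ) = (i : ℕ) + 1 then 1 else 0) +
  (if (i : ℕ) = N - 1 ∧ (j : ℕ) = 0 then y else 0)

/-- `Rprod N I t y k = R_{t+k-1}(y) ⋯ R_{t+1}(y) · R_t(y)`. -/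
noncomputable def Rprod (N : ℕ) (I : ℤ → ℤ → ℂ) (t : ℤ) (y : ℂ) :
    ℕ → Matrix (Fin N) (Fin N) ℂ
  | 0 => 1
  | k + 1 => Rtoda N I (t + k) y * Rprod N I t y k

/-- `X_t(y) = L_t(y) · R_{t+M-1}(y) ⋯ R_{t+1}(y) · R_t(y)`. -/
noncomputable def Xtoda (N M : ℕ) (I V : ℤ → ℤ → ℂ) (t : ℤ) (y : ℂ) :
    Matrix (Fin N) (Fin N) ℂ :=
  Ltoda N V t y * Rprod N I t y M

/-- `(I, V)` is a solution of the hungry periodic discrete Toda equation `Toda_{N,M}`. -/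
def IsToda (N M : ℕ) (I V : ℤ → ℤ → ℂ) : Prop :=
  ∀ n t : ℤ,
    I n (t + M) = I n t + V n t - V (n - 1) (t + 1) ∧
    V n (t + 1) * I n (t + M) = I (n + 1) t * V n t ∧
    I (n + N) t = I n t ∧ V (n + N) t = V n t

section WeightedPermutation

variable {ι R : Type*} [Fintype ι] [DecidableEq ι]

/-- The monomial matrix with entry `w i` at `(i, σ i)` and zeros elsewhere, as a unit of the
matrix ring; its inverse has entry `(w i)⁻¹` at `(σ i, i)`. -/
def weightedPermUnit [Semiring R] (w : ι → Rˣ) (σ : Equiv.Perm ι) : (Matrix ι ι R)ˣ where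
  val := diagonal (fun i => (w i : R)) * σ.permMatrix R
  inv := σ⁻¹.permMatrix R * diagonal (fun i => (↑(w i)⁻¹ : R))
  val_inv := by
    rw [mul_assoc, ← mul_assoc (σ.permMatrix R), ← permMatrix_mul, inv_mul_cancel,
      permMatrix_one, one_mul, diagonal_mul_diagonal]
    simp only [Units.mul_inv, diagonal_one]
  inv_val := by
    rw [mul_assoc, ← mul_assoc (diagonal _), diagonal_mul_diagonal]
    simp only [Units.inv_mul, diagonal_one, one_mul]
    rw [← permMatrix_mul, mul_inv_cancel, permMatrix_one]

lemma weightedPermUnit_apply [Semiring R] (w : ι → Rˣ) (σ : Equiv.Perm ι) (i j : ι) :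
    (weightedPermUnit w σ : Matrix ι ι R) i j = if σ i = j then (w i : R) else 0 := by
  simp [weightedPermUnit, PEquiv.toMatrix_apply, eq_comm]

lemma weightedPermUnit_inv_apply [Semiring R] (w : ι → Rˣ) (σ : Equiv.Perm ι) (i j : ι) :
    (↑(weightedPermUnit w σ)⁻¹ : Matrix ι ι R) i j = if σ j = i then (↑(w j)⁻¹ : R) else 0 := by
  simp [weightedPermUnit, ← Units.inv_eq_val_inv, PEquiv.toMatrix_apply, Equiv.eq_symm_apply,
    eq_comm]

lemma weightedPermUnit_semiconjBy_diagonal [CommSemiring R] (w : ι → Rˣ) (σ : Equiv.Perm ι)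
    (a : ι → R) :
    SemiconjBy (weightedPermUnit w σ : Matrix ι ι R) (diagonal a) (diagonal (a ∘ σ)) := by
  ext i j
  rw [mul_diagonal, diagonal_mul, weightedPermUnit_apply]
  split_ifs with h
  · rw [← h, Function.comp_apply, mul_comm]
  · simp only [zero_mul, mul_zero]

end WeightedPermutation

lemma one_add_inv_mul_mul_add_of_semiconjBy {A : Type*} [Semiring A] (S : Aˣ) {J J' K U U' W : A}
    (hJ : SemiconjBy (S : A) J K) (hW : SemiconjBy (S : A) W U')
    (hadd : J' + W = J + U) (hmul : U' * J' = K * U) :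
    (1 + ↑S⁻¹ * U') * (J' + S) = (J + S) * (1 + ↑S⁻¹ * U) := by
  have hW' : ↑S⁻¹ * U' * S = W := by rw [hW.units_inv_symm_left.eq, mul_assoc, S.inv_mul, mul_one]
  have hJ' : ↑S⁻¹ * U' * J' = J * ↑S⁻¹ * U := by
    rw [mul_assoc, hmul, ← mul_assoc, hJ.units_inv_symm_left.eq]
  calc (1 + ↑S⁻¹ * U') * (J' + S)
      = (J' + ↑S⁻¹ * U' * S) + S + ↑S⁻¹ * U' * J' := by
        simp only [mul_add, add_mul, one_mul]; abel
    _ = (J + U) + S + J * ↑S⁻¹ * U := by rw [hW', hadd, hJ']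
    _ = (J + S) * (1 + ↑S⁻¹ * U) := by
        simp only [mul_add, add_mul, mul_one, S.mul_inv_cancel_left, mul_assoc]; abel

section CyclicShift

variable {R : Type*}

/-- The diagonal matrix `diag(a_1, …, a_N)`; the entry at `i : Fin N` is `a (i + 1)` because the
lattice is indexed from `1`. -/
def siteDiagonal [Zero R] (N : ℕ) (a : ℤ → R) : Matrix (Fin N) (Fin N) R :=
  diagonal fun i => a ((i : ℕ) + 1)

/-- The twisted cyclic shift as a unit, for an invertible twist `y` in the corner; over `ℂ` it is
`Stoda N y`. -/
def shiftUnit [Semiring R] (N : ℕ) (y : Rˣ) : (Matrix (Fin N) (Fin N) R)ˣ :=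
  weightedPermUnit (fun i => if (i : ℕ) = N - 1 then y else 1) (finRotate N)

lemma val_finRotate {N : ℕ} (i : Fin N) :
    (finRotate N i : ℕ) = if (i : ℕ) = N - 1 then 0 else (i : ℕ) + 1 := by
  cases N with
  | zero => exact i.elim0
  | succ m => simp only [coe_finRotate, Fin.ext_iff, Fin.val_last, Nat.add_sub_cancel]

lemma siteDiagonal_add [AddZeroClass R] (N : ℕ) (a b : ℤ → R) :
    siteDiagonal N (a + b) = siteDiagonal N a + siteDiagonal N b :=
  (diagonal_add _ _).symm

lemma siteDiagonal_mul [NonUnitalNonAssocSemiring R] (N : ℕ) (a b : ℤ → R) :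
    siteDiagonal N (a * b) = siteDiagonal N a * siteDiagonal N b :=
  (diagonal_mul_diagonal _ _).symm

lemma shiftUnit_semiconjBy_siteDiagonal [CommSemiring R] {N : ℕ} (y : Rˣ) {a : ℤ → R}
    (ha : Function.Periodic a N) :
    SemiconjBy (shiftUnit N y : Matrix (Fin N) (Fin N) R) (siteDiagonal N a)
      (siteDiagonal N fun n => a (n + 1)) := by
  have hshift : (fun i : Fin N => a ((i : ℕ) + 1)) ∘ finRotate N =
      fun i : Fin N => a ((i : ℕ) + 1 + 1) := by
    funext i
    rw [Function.comp_apply, val_finRotate]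
    split_ifs with hi
    · -- wrap-around at the last site: `a (N + 1) = a 1`
      rw [← ha]
      congr 1
      omega
    · push_cast
      rfl
  simpa only [siteDiagonal, shiftUnit, hshift] using
    weightedPermUnit_semiconjBy_diagonal _ (finRotate N) fun i : Fin N => a ((i : ℕ) + 1)

end CyclicShift

lemma coe_shiftUnit (N : ℕ) (y : ℂˣ) : (shiftUnit N y : Matrix (Fin N) (Fin N) ℂ) = Stoda N y := by
  ext i j
  simp only [shiftUnit, weightedPermUnit_apply, Stoda, Fin.ext_iff, val_finRotate]
  by_cases hi : (i : ℕ) = N - 1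
  · have hj : (j : ℕ) ≠ N - 1 + 1 := by omega
    simp [hi, hj, eq_comm]
  · simp [hi, eq_comm]

lemma Rtoda_eq_siteDiagonal_add (N : ℕ) (I : ℤ → ℤ → ℂ) (t : ℤ) (y : ℂˣ) :
    Rtoda N I t y = siteDiagonal N (fun n => I n t) + shiftUnit N y := by
  ext i j
  simp only [coe_shiftUnit, Rtoda, Stoda, siteDiagonal, Matrix.add_apply, diagonal_apply, add_assoc]

lemma Ltoda_eq_one_add_inv_mul (N : ℕ) (V : ℤ → ℤ → ℂ) (t : ℤ) (y : ℂˣ) :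
    Ltoda N V t y =
      1 + (↑(shiftUnit N y)⁻¹ : Matrix (Fin N) (Fin N) ℂ) * siteDiagonal N (fun n => V n t) := by
  ext i j
  simp only [Ltoda, siteDiagonal, Matrix.add_apply, one_apply, mul_diagonal, shiftUnit,
    weightedPermUnit_inv_apply, Fin.ext_iff, val_finRotate, add_assoc]
  congr 1
  by_cases hj : (j : ℕ) = N - 1
  · have hi : (i : ℕ) ≠ N - 1 + 1 := by omega
    have hN : ((N - 1 : ℕ) : ℤ) + 1 = N := by omega
    simp [hi, hj, hN, eq_comm, div_eq_inv_mul]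
  · simp [hj, eq_comm]

namespace IsToda

variable {N M : ℕ} {I V : ℤ → ℤ → ℂ}

lemma periodic_I (h : IsToda N M I V) (t : ℤ) : Function.Periodic (fun n => I n t) N :=
  fun n => (h n t).2.2.1

lemma periodic_V (h : IsToda N M I V) (t : ℤ) : Function.Periodic (fun n => V n t) N :=
  fun n => (h n t).2.2.2

lemma Ltoda_mul_Rtoda (h : IsToda N M I V) (t : ℤ) {y : ℂ} (hy : y ≠ 0) :
    Ltoda N V (t + 1) y * Rtoda N I (t + M) y = Rtoda N I t y * Ltoda N V t y := by
  lift y to ℂˣ using hy.isUnit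
  simp only [Ltoda_eq_one_add_inv_mul, Rtoda_eq_siteDiagonal_add]
  have hI := shiftUnit_semiconjBy_siteDiagonal y (h.periodic_I t)
  have hV := shiftUnit_semiconjBy_siteDiagonal y ((h.periodic_V (t + 1)).sub_const 1)
  simp only [add_sub_cancel_right] at hV
  refine one_add_inv_mul_mul_add_of_semiconjBy (shiftUnit N y) hI hV ?_ ?_
  · rw [← siteDiagonal_add, ← siteDiagonal_add]
    congr 1
    funext n
    exact eq_sub_iff_add_eq.mp (h n t).1
  · rw [← siteDiagonal_mul, ← siteDiagonal_mul]
    congr 1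
    funext n
    exact (h n t).2.1

lemma Rprod_mul_Ltoda (h : IsToda N M I V) (t : ℤ) {y : ℂ} (hy : y ≠ 0) (k : ℕ) :
    Rprod N I t y k * Ltoda N V t y = Ltoda N V (t + k) y * Rprod N I (t + M) y k := by
  induction k with
  | zero => simp only [Rprod, one_mul, mul_one, Nat.cast_zero, add_zero]
  | succ k ih =>
    calc Rtoda N I (t + k) y * Rprod N I t y k * Ltoda N V t y
        = Rtoda N I (t + k) y * Ltoda N V (t + k) y * Rprod N I (t + M) y k := by
          rw [mul_assoc, ih, mul_assoc]
      _ = Ltoda N V (t + k + 1) y * Rtoda N I (t + k + M) y * Rprod N I (t + M) y k := by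
          rw [h.Ltoda_mul_Rtoda (t + k) hy]
      _ = Ltoda N V (t + ↑(k + 1)) y * (Rtoda N I (t + M + k) y * Rprod N I (t + M) y k) := by
          rw [mul_assoc, add_right_comm t (k : ℤ) M, Nat.cast_succ, add_assoc t (k : ℤ) 1]

end IsToda

/-- for a solution of hpdToda, `L_t(y) X_{t+M}(y) = X_t(y) L_t(y)`. -/
theorem stmt2 (N M : ℕ) (hN : 0 < N) (hM : 0 < M) (I V : ℤ → ℤ → ℂ)
    (hsol : IsToda N M I V) :
    ∀ (t : ℤ) (y : ℂ), y ≠ 0 →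
      Ltoda N V t y * Xtoda N M I V (t + M) y = Xtoda N M I V t y * Ltoda N V t y := by
  intro t y hy
  rw [Xtoda, Xtoda, mul_assoc, hsol.Rprod_mul_Ltoda t hy M]
end

section
/- Let I_1^t, I_2^t, I_1^{t+1}, I_2^{t+1}, V_1^t, V_2^t be arbitrary complex numbers and let y be a nonzero complex number. With N = M = 2, let X_t(y) := L_t(y)·R_{t+1}(y)·R_t(y), where L_t(y) = [[1, V_2^t/y],[V_1^t, 1]] and R_s(y) = [[I_1^s, 1],[y, I_2^s]]. Then for all x ∈ ℂ, det(X_t(y) − x·E) = y² − y(2x + U_1) + x² − U_2·x + U_3 − U_4·y^{−1}, where U_1 = I_1^tI_2^t + I_1^{t+1}I_2^{t+1} + V_1^tV_2^t, U_2 = I_1^tI_1^{t+1} + I_2^tI_2^{t+1} + I_1^tV_2^t + I_1^{t+1}V_1^t + I_2^tV_1^t + I_2^{t+1}V_2^t, U_3 = I_1^tI_2^tI_1^{t+1}I_2^{t+1} + I_1^{t+1}I_2^{t+1}V_1^tV_2^t + V_1^tV_2^tI_1^tI_2^t, and U_4 = I_1^tI_2^tI_1^{t+1}I_2^{t+1}V_1^tV_2^t.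 -/
open Matrix

/-!
A `2 × 2` characteristic polynomial is given by the trace and the determinant. Here
`det X_t(y) = y⁻¹ (y - I₁ᵗI₂ᵗ) (y - I₁ᵗ⁺¹I₂ᵗ⁺¹) (y - V₁ᵗV₂ᵗ)`, so `U₁`, `U₃`, `U₄` are the
elementary symmetric functions of these three roots, while `U₂` comes from
`tr X_t(y) = 2y + U₂`.
-/

section LaxMatrices

variable {R : Type*} [CommRing R]

/-- The factor `L_t(y)` of the Lax matrix `X_t(y)` for `N = 2`. The spectral parameter `y` is a
unit because its inverse occurs in a matrix entry. -/
def laxL (V₁ V₂ : R) (y : Rˣ) : Matrix (Fin 2) (Fin 2) R :=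
  !![1, V₂ /ₚ y; V₁, 1]

/-- The factor `R_s(y)` of the Lax matrix `X_t(y)` for `N = 2`, with `I₁`, `I₂` the variables at
time `s`; in `X_t(y)` it occurs at `s = t` and, with `J₁`, `J₂` as arguments, at `s = t + 1`. -/
def laxR (I₁ I₂ y : R) : Matrix (Fin 2) (Fin 2) R :=
  !![I₁, 1; y, I₂]

theorem det_sub_smul_one_fin_two (A : Matrix (Fin 2) (Fin 2) R) (x : R) :
    (A - x • (1 : Matrix (Fin 2) (Fin 2) R)).det = x ^ 2 - A.trace * x + A.det := by
  simp only [det_fin_two, trace_fin_two, Matrix.sub_apply, Matrix.smul_apply, one_apply_eq,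
    smul_eq_mul, one_apply_ne zero_ne_one, one_apply_ne one_ne_zero]
  ring

theorem det_laxL (V₁ V₂ : R) (y : Rˣ) : (laxL V₁ V₂ y).det = (y - V₁ * V₂) /ₚ y := by
  have hV : V₂ /ₚ y * y = V₂ := divp_mul_cancel V₂ y
  rw [laxL, det_fin_two_of, eq_divp_iff_mul_eq]
  linear_combination -V₁ * hV

theorem det_laxR (I₁ I₂ y : R) : (laxR I₁ I₂ y).det = I₁ * I₂ - y := by
  rw [laxR, det_fin_two_of, one_mul]

theorem det_laxL_mul_laxR_mul_laxR (V₁ V₂ I₁ I₂ J₁ J₂ : R) (y : Rˣ) :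
    (laxL V₁ V₂ y * laxR J₁ J₂ y * laxR I₁ I₂ y).det =
      ((y - I₁ * I₂) * (y - J₁ * J₂) * (y - V₁ * V₂)) /ₚ y := by
  rw [det_mul, det_mul, det_laxL, det_laxR, det_laxR]
  simp only [divp]
  ring

theorem trace_laxL_mul_laxR_mul_laxR (V₁ V₂ I₁ I₂ J₁ J₂ : R) (y : Rˣ) :
    (laxL V₁ V₂ y * laxR J₁ J₂ y * laxR I₁ I₂ y).trace =
      2 * y + (I₁ * J₁ + I₂ * J₂ + I₁ * V₂ + J₁ * V₁ + I₂ * V₁ + J₂ * V₂) := by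
  have hV : V₂ /ₚ y * y = V₂ := divp_mul_cancel V₂ y
  simp only [laxL, laxR, mul_fin_two, trace_fin_two_of]
  linear_combination (I₁ + J₂) * hV

theorem stmt13_general (I₁ I₂ J₁ J₂ V₁ V₂ : R) (y : Rˣ) (x : R) :
    (laxL V₁ V₂ y * laxR J₁ J₂ y * laxR I₁ I₂ y - x • (1 : Matrix (Fin 2) (Fin 2) R)).det =
      y ^ 2 - y * (2 * x + (I₁ * I₂ + J₁ * J₂ + V₁ * V₂)) + x ^ 2 -
        (I₁ * J₁ + I₂ * J₂ + I₁ * V₂ + J₁ * V₁ + I₂ * V₁ + J₂ * V₂) * x +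
        (I₁ * I₂ * J₁ * J₂ + J₁ * J₂ * V₁ * V₂ + V₁ * V₂ * I₁ * I₂) -
        (I₁ * I₂ * J₁ * J₂ * V₁ * V₂) * (y⁻¹ : Rˣ) := by
  have hy : (y : R) * (y⁻¹ : Rˣ) = 1 := y.mul_inv
  rw [det_sub_smul_one_fin_two, trace_laxL_mul_laxR_mul_laxR, det_laxL_mul_laxR_mul_laxR, divp]
  linear_combination
    (y ^ 2 - (I₁ * I₂ + J₁ * J₂ + V₁ * V₂) * y +
      (I₁ * I₂ * J₁ * J₂ + J₁ * J₂ * V₁ * V₂ + V₁ * V₂ * I₁ * I₂)) * hy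

end LaxMatrices

/-- the characteristic polynomial of `X_t(y) = L_t(y)·R_{t+1}(y)·R_t(y)`
for `N = M = 2`:
`det(X_t(y) − xE) = y² − y(2x + U₁) + x² − U₂x + U₃ − U₄y⁻¹`. -/
theorem stmt13 (I1t I2t I1t1 I2t1 V1t V2t : ℂ) (y : ℂ) (hy : y ≠ 0) (x : ℂ) :
    ((!![(1 : ℂ), V2t / y; V1t, 1] * !![I1t1, 1; y, I2t1] * !![I1t, 1; y, I2t]) -
        x • (1 : Matrix (Fin 2) (Fin 2) ℂ)).det =
      y ^ 2 - y * (2 * x + (I1t * I2t + I1t1 * I2t1 + V1t * V2t)) + x ^ 2 -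
        (I1t * I1t1 + I2t * I2t1 + I1t * V2t + I1t1 * V1t + I2t * V1t + I2t1 * V2t) * x +
        (I1t * I2t * I1t1 * I2t1 + I1t1 * I2t1 * V1t * V2t + V1t * V2t * I1t * I2t) -
        (I1t * I2t * I1t1 * I2t1 * V1t * V2t) * y⁻¹ := by
  rw [← divp_mk0 V2t hy]
  exact stmt13_general I1t I2t I1t1 I2t1 V1t V2t (Units.mk0 y hy) x
end

section
/- Let N, M be positive integers and let I_n^t, V_n^t (n, t ∈ ℤ) be complex numbers, N-periodic in n. Then for each t ∈ ℤ there exists a polynomial G(x, Y) in two variables with complex coefficients such that: (a) for every x ∈ ℂ and every nonzero y ∈ ℂ, y·det(X_t(y) − x·E) = G(x, y); (b) the degree of G in Y is at most M+1; (c) the degree of G in x is N, and the coefficient of x^N in G(x, Y) is (−1)^N·Y. -/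
/-!
A determinant is affine along a rank-one direction: `det (A + a u vᵀ)` equals
`(1 - a) det A + a det (A + u vᵀ)`. The variable `y` enters each `R_s(y)` through a single entry,
so expanding the `M` factors one after another shows that the coefficients of the characteristic
polynomial of `B R ⋯ R`, with `B` constant, have degree at most `M` in `y`. Likewise `y⁻¹` enters
`L_t(y) = L + y⁻¹ u vᵀ` through a single entry, and multiplying the same identity with `a = y⁻¹` by
`y` removes the denominator at the cost of one more degree.
-/

open Matrix Finset Filter

section RankOnePencils

open Polynomial

lemma vecMulVec_map {F α β m n : Type*} [Mul α] [Mul β] [FunLike F α β] [MulHomClass F α β]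
    (f : F) (u : m → α) (v : n → α) :
    (vecMulVec u v).map f = vecMulVec (f ∘ u) (f ∘ v) := by
  ext i j
  simp [vecMulVec_apply]

variable {R n : Type*} [CommRing R] [Fintype n] [DecidableEq n]

lemma det_add_vecMulVec_eq_cramer (A : Matrix n n R) (u v : n → R) :
    (A + vecMulVec u v).det =
      cramer (fromBlocks A 0 (replicateRow Unit v) 1) (Sum.elim (-u) 1) (Sum.inr ()) := by
  have bordered : (fromBlocks A 0 (replicateRow Unit v) 1).updateCol (Sum.inr ())
      (Sum.elim (-u) 1) = fromBlocks A (replicateCol Unit (-u)) (replicateRow Unit v) 1 := by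
    ext (i | i) (j | j) <;> simp
  have replicateCol_neg : replicateCol Unit (-u) = -replicateCol Unit u := rfl
  rw [cramer_apply, bordered, det_fromBlocks_one₂₂, replicateCol_neg, Matrix.neg_mul,
    sub_neg_eq_add, vecMulVec_eq Unit]

lemma det_add_smul_vecMulVec (A : Matrix n n R) (u v : n → R) (a : R) :
    (A + a • vecMulVec u v).det = (1 - a) * A.det + a * (A + vecMulVec u v).det := by
  have column : (Sum.elim (-(a • u)) 1 : n ⊕ Unit → R) =
      (1 - a) • Sum.elim (-(0 : n → R)) (1 : Unit → R) + a • Sum.elim (-u) (1 : Unit → R) := by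
    ext (i | i) <;> simp
  have det_eq := det_add_vecMulVec_eq_cramer A 0 v
  rw [zero_vecMulVec, add_zero] at det_eq
  rw [← smul_vecMulVec, det_add_vecMulVec_eq_cramer, column, map_add, map_smul, map_smul,
    det_eq, det_add_vecMulVec_eq_cramer A u v, Pi.add_apply, Pi.smul_apply, Pi.smul_apply,
    smul_eq_mul, smul_eq_mul]

lemma charmatrix_add_smul_vecMulVec (A : Matrix n n R) (u v : n → R) (a : R) :
    (A + a • vecMulVec u v).charmatrix =
      A.charmatrix + C a • vecMulVec (fun i => -C (u i)) (fun j => C (v j)) := by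
  ext1 i j
  simp only [charmatrix_apply, Matrix.add_apply, Matrix.smul_apply, vecMulVec_apply, smul_eq_mul,
    map_add, map_mul]
  ring

lemma charpoly_add_smul_vecMulVec (A : Matrix n n R) (u v : n → R) (a : R) :
    (A + a • vecMulVec u v).charpoly =
      C (1 - a) * A.charpoly + C a * (A + vecMulVec u v).charpoly := by
  have charmatrix_add := charmatrix_add_smul_vecMulVec A u v 1
  rw [one_smul, map_one, one_smul] at charmatrix_add
  rw [charpoly, charmatrix_add_smul_vecMulVec, det_add_smul_vecMulVec, ← charmatrix_add,
    C_sub, C_1, charpoly, charpoly]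

lemma charpoly_mul_add_smul_vecMulVec_mul (B A Q : Matrix n n R) (u v : n → R) (a : R) :
    (B * ((A + a • vecMulVec u v) * Q)).charpoly =
      C (1 - a) * (B * A * Q).charpoly + C a * (B * (A + vecMulVec u v) * Q).charpoly := by
  have expand (c : R) : B * (A + c • vecMulVec u v) * Q =
      B * A * Q + c • vecMulVec (B *ᵥ u) (v ᵥ* Q) := by
    rw [Matrix.mul_add, Matrix.add_mul, Matrix.mul_smul, Matrix.smul_mul, mul_vecMulVec,
      vecMulVec_mul]
  have expand_one := expand 1
  rw [one_smul, one_smul] at expand_one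
  rw [← Matrix.mul_assoc, expand, expand_one, charpoly_add_smul_vecMulVec]

lemma det_sub_smul_one (A : Matrix n n R) (x : R) :
    (A - x • (1 : Matrix n n R)).det = (-1) ^ Fintype.card n * A.charpoly.eval x := by
  rw [eval_charpoly, ← neg_sub, det_neg, scalar_apply, smul_one_eq_diagonal]

lemma coeff_card_charpoly (A : Matrix n n R) : A.charpoly.coeff (Fintype.card n) = 1 := by
  nontriviality R
  simpa using A.charpoly_monic.coeff_natDegree

/-- A rank-one pencil: a polynomial matrix `A + X u vᵀ` with `A`, `u`, `v` constant (so `u vᵀ = 0`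
is allowed). The matrices `R_t(y)`, in which `y` occurs in a single entry, are of this form. -/
def IsRankOnePencil (P : Matrix n n R[X]) : Prop :=
  ∃ (A : Matrix n n R) (u v : n → R), P = A.map C + (X : R[X]) • (vecMulVec u v).map C

theorem natDegree_coeff_charpoly_mul_prod_le (B : Matrix n n R) {l : List (Matrix n n R[X])}
    (hl : ∀ P ∈ l, IsRankOnePencil P) (i : ℕ) :
    ((B.map C * l.prod).charpoly.coeff i).natDegree ≤ l.length := by
  induction l generalizing B with
  | nil => simp [charpoly_map]
  | cons P l ih =>
    rw [List.forall_mem_cons] at hl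
    obtain ⟨⟨A, u, v, rfl⟩, hl⟩ := hl
    have ih_base := ih (B * A) hl
    have ih_shift := ih (B * (A + vecMulVec u v)) hl
    rw [Matrix.map_mul] at ih_base
    rw [Matrix.map_mul, Matrix.map_add C (map_add C), vecMulVec_map] at ih_shift
    rw [List.prod_cons, vecMulVec_map, charpoly_mul_add_smul_vecMulVec_mul, coeff_add,
      coeff_C_mul, coeff_C_mul, List.length_cons]
    compute_degree
    omega

/-- The two-variable polynomial `y · det ((L + y⁻¹ u vᵀ) P(y) - x)`, with `x` the outer and `y` the
inner variable; its zero set is the spectral curve of `(L + y⁻¹ u vᵀ) P(y)`. Denominators are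
avoided by means of
`y · charpoly ((L + y⁻¹ u vᵀ) P) = (y - 1) · charpoly (L P) + charpoly ((L + u vᵀ) P)`. -/
noncomputable def spectralPolynomial (L : Matrix n n R) (u v : n → R) (P : Matrix n n R[X]) :
    R[X][X] :=
  C (C ((-1) ^ Fintype.card n)) *
    (C (X - 1) * (L.map C * P).charpoly + ((L + vecMulVec u v).map C * P).charpoly)

lemma evalEval_charpoly_map_C_mul (L : Matrix n n R) (P : Matrix n n R[X]) (x y : R) :
    (L.map C * P).charpoly.evalEval y x = (L * P.map (eval y)).charpoly.eval x := by
  have specialize_mul : L * P.map (eval y) = (L.map C * P).map (evalRingHom y) := by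
    rw [Matrix.map_mul, Matrix.map_map]
    congr 1
    ext i j
    simp
  rw [specialize_mul, charpoly_map, map_evalRingHom_eval]

lemma evalEval_spectralPolynomial (L : Matrix n n R) (u v : n → R) (P : Matrix n n R[X])
    (x : R) (y : Rˣ) :
    (spectralPolynomial L u v P).evalEval (y : R) x =
      y * ((L + (↑y⁻¹ : R) • vecMulVec u v) * P.map (eval (y : R)) -
        x • (1 : Matrix n n R)).det := by
  have affine := charpoly_mul_add_smul_vecMulVec_mul 1 L (P.map (eval (y : R))) u v (↑y⁻¹ : R)
  rw [one_mul, one_mul, one_mul] at affine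
  simp only [spectralPolynomial, evalEval_mul, evalEval_add, evalEval_C,
    evalEval_charpoly_map_C_mul, det_sub_smul_one, affine, eval_add, eval_mul, eval_C,
    eval_sub, eval_X, eval_one]
  linear_combination (-1) ^ Fintype.card n * (eval x (L * P.map (eval (y : R))).charpoly -
    eval x ((L + vecMulVec u v) * P.map (eval (y : R))).charpoly) * y.mul_inv

lemma natDegree_coeff_spectralPolynomial_le (L : Matrix n n R) (u v : n → R)
    {l : List (Matrix n n R[X])} (hl : ∀ P ∈ l, IsRankOnePencil P) (i : ℕ) :
    ((spectralPolynomial L u v l.prod).coeff i).natDegree ≤ l.length + 1 := by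
  have base := natDegree_coeff_charpoly_mul_prod_le L hl i
  have shift := natDegree_coeff_charpoly_mul_prod_le (L + vecMulVec u v) hl i
  rw [spectralPolynomial, coeff_C_mul, coeff_add, coeff_C_mul]
  refine (natDegree_C_mul_le _ _).trans ?_
  compute_degree
  omega

lemma coeff_card_spectralPolynomial (L : Matrix n n R) (u v : n → R) (P : Matrix n n R[X]) :
    (spectralPolynomial L u v P).coeff (Fintype.card n) = C ((-1) ^ Fintype.card n) * X := by
  rw [spectralPolynomial, coeff_C_mul, coeff_add, coeff_C_mul, coeff_card_charpoly,
    coeff_card_charpoly, mul_one, sub_add_cancel]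

lemma natDegree_spectralPolynomial [Nontrivial R] (L : Matrix n n R) (u v : n → R)
    (P : Matrix n n R[X]) : (spectralPolynomial L u v P).natDegree = Fintype.card n := by
  refine natDegree_eq_of_le_of_coeff_ne_zero ?_ ?_
  · refine (natDegree_C_mul_le _ _).trans (natDegree_add_le_of_degree_le ?_ ?_)
    · exact (natDegree_C_mul_le _ _).trans (charpoly_natDegree_eq_dim _).le
    · exact (charpoly_natDegree_eq_dim _).le
  · rw [coeff_card_spectralPolynomial, C_mul_X_eq_monomial, Ne, monomial_eq_zero_iff]
    exact (isUnit_neg_one.pow _).ne_zero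

theorem stmt15_general [Nontrivial R] (L : Matrix n n R) (u v : n → R)
    {l : List (Matrix n n R[X])} (hl : ∀ P ∈ l, IsRankOnePencil P) :
    ∃ G : R[X][X],
      (∀ (x : R) (y : Rˣ),
        y * ((L + (↑y⁻¹ : R) • vecMulVec u v) * l.prod.map (eval (y : R)) -
          x • (1 : Matrix n n R)).det = G.evalEval (y : R) x) ∧
      (∀ i, (G.coeff i).natDegree ≤ l.length + 1) ∧
      G.natDegree = Fintype.card n ∧
      G.coeff (Fintype.card n) = C ((-1) ^ Fintype.card n) * X :=
  ⟨spectralPolynomial L u v l.prod,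
    fun x y => (evalEval_spectralPolynomial L u v l.prod x y).symm,
    natDegree_coeff_spectralPolynomial_le L u v hl,
    natDegree_spectralPolynomial L u v l.prod,
    coeff_card_spectralPolynomial L u v l.prod⟩

end RankOnePencils

section Toda

open Polynomial

lemma exists_isRankOnePencil_map_eval_eq_Rtoda (N : ℕ) (I : ℤ → ℤ → ℂ) (t : ℤ) :
    ∃ P : Matrix (Fin N) (Fin N) ℂ[X],
      IsRankOnePencil P ∧ ∀ y, P.map (eval y) = Rtoda N I t y := by
  refine ⟨_, ⟨Rtoda N I t 0, fun i => if (i : ℕ) = N - 1 then 1 else 0,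
    fun j => if (j : ℕ) = 0 then 1 else 0, rfl⟩, fun y => ?_⟩
  ext i j
  simp only [Rtoda, map_apply, Matrix.add_apply, Matrix.smul_apply, vecMulVec_apply, smul_eq_mul,
    eval_add, eval_mul, eval_X, eval_C, ite_self, add_zero, ite_and]
  split_ifs <;> simp

lemma exists_isRankOnePencil_list_prod_map_eval_eq_Rprod (N : ℕ) (I : ℤ → ℤ → ℂ) (t : ℤ) (k : ℕ) :
    ∃ l : List (Matrix (Fin N) (Fin N) ℂ[X]),
      l.length = k ∧ (∀ P ∈ l, IsRankOnePencil P) ∧ ∀ y, l.prod.map (eval y) = Rprod N I t y k := by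
  induction k with
  | zero => exact ⟨[], rfl, by simp, fun y => by simp [Rprod]⟩
  | succ k ih =>
    obtain ⟨l, hlen, hl, hprod⟩ := ih
    obtain ⟨P, hP, hR⟩ := exists_isRankOnePencil_map_eval_eq_Rtoda N I (t + k)
    refine ⟨P :: l, by rw [List.length_cons, hlen], List.forall_mem_cons.2 ⟨hP, hl⟩, fun y => ?_⟩
    rw [List.prod_cons, ← coe_evalRingHom, Matrix.map_mul, coe_evalRingHom, hR, hprod, Rprod]

-- Since `V / 0 = 0`, the matrix `Ltoda N V t 0` is `L_t` without its corner entry.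
lemma exists_Ltoda_eq_add_inv_smul_vecMulVec (N : ℕ) (V : ℤ → ℤ → ℂ) (t : ℤ) :
    ∃ u v : Fin N → ℂ, ∀ y, Ltoda N V t y = Ltoda N V t 0 + y⁻¹ • vecMulVec u v := by
  refine ⟨fun i => if (i : ℕ) = 0 then 1 else 0, fun j => if (j : ℕ) = N - 1 then V N t else 0,
    fun y => ?_⟩
  ext i j
  simp only [Ltoda, Matrix.add_apply, Matrix.smul_apply, vecMulVec_apply, smul_eq_mul, ite_self,
    add_zero, ite_and, div_zero]
  split_ifs <;> simp [div_eq_inv_mul]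

lemma exists_Xtoda_eq_add_inv_smul_vecMulVec_mul (N M : ℕ) (I V : ℤ → ℤ → ℂ) (t : ℤ) :
    ∃ (L : Matrix (Fin N) (Fin N) ℂ) (u v : Fin N → ℂ) (l : List (Matrix (Fin N) (Fin N) ℂ[X])),
      l.length = M ∧ (∀ P ∈ l, IsRankOnePencil P) ∧
      ∀ y, Xtoda N M I V t y = (L + y⁻¹ • vecMulVec u v) * l.prod.map (eval y) := by
  obtain ⟨u, v, hL⟩ := exists_Ltoda_eq_add_inv_smul_vecMulVec N V t
  obtain ⟨l, hlen, hl, hprod⟩ := exists_isRankOnePencil_list_prod_map_eval_eq_Rprod N I t M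
  exact ⟨Ltoda N V t 0, u, v, l, hlen, hl, fun y => by rw [Xtoda, hL, hprod]⟩

end Toda

/-- `y·det(X_t(y) − xE)` is a polynomial `G(x, Y)` (outer variable `x`,
inner variable `Y`), of degree at most `M+1` in `Y` and of degree `N` in `x` with
coefficient of `x^N` equal to `(−1)^N·Y`. -/
theorem stmt15 (N M : ℕ) (hN : 0 < N) (hM : 0 < M) (I V : ℤ → ℤ → ℂ)
    (hIper : ∀ n t : ℤ, I (n + N) t = I n t) (hVper : ∀ n t : ℤ, V (n + N) t = V n t)
    (t : ℤ) :
    ∃ G : Polynomial (Polynomial ℂ),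
      (∀ (x y : ℂ), y ≠ 0 →
        y * (Xtoda N M I V t y - x • (1 : Matrix (Fin N) (Fin N) ℂ)).det =
          Polynomial.eval y (Polynomial.eval (Polynomial.C x) G)) ∧
      (∀ i : ℕ, (G.coeff i).natDegree ≤ M + 1) ∧
      G.natDegree = N ∧
      G.coeff N = Polynomial.C ((-1 : ℂ) ^ N) * Polynomial.X := by
  obtain ⟨L, u, v, l, rfl, hl, hX⟩ := exists_Xtoda_eq_add_inv_smul_vecMulVec_mul N M I V t
  obtain ⟨G, hdet, hG⟩ := stmt15_general L u v hl
  rw [Fintype.card_fin] at hG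
  exact ⟨G, fun x y hy => by simpa [hX] using hdet x (Units.mk0 y hy), hG⟩
end
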